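/- arXiv:math/0305109 — 2 statements merged into one kernel-verified Lean document; each statement's English description precedes it below -/
import Mathlib

section
/- Let Φ, Ψ be Orlicz functions, φ = {φ_n}_{n≥1}, w = {w_n}_{n≥1} positive nondecreasing weight sequences satisfying the Δ₂-condition with constants C_φ, C_w, and ψ = {ψ_n}_{n≥0}, ϱ = {ϱ_n}_{n≥0} positive nondecreasing weight sequences satisfying the Δ₂-condition with constants C_ψ, C_ϱ. For f ∈ L¹(𝕋) with Fourier coefficients {f_n}, define ‖f‖_W = Σ_{k∈ℤ}|f_k|, ‖f‖₋ = the Luxemburg norm of {f_{−k}}_{k≥1} in ℓ^Φ_{φ,w}, ‖f‖₊ = the Luxemburg norm of {f_k}_{k≥0} in ℓ^Ψ_{ψ,ϱ}, and ‖f‖ = ‖f‖_W + ‖f‖₋ + ‖f‖₊. Then for all f, g with ‖f‖, ‖g‖ < ∞, one has ‖fg‖ ≤ C·‖f‖·‖g‖ with C = 1 + 2(1+C_w)·C_φ + 2(1+C_ϱ)·C_ψ. -/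
open scoped ENNReal
open Filter MeasureTheory

instance fact_two_pi_pos : Fact (0 < 2 * Real.pi) := ⟨Real.two_pi_pos⟩

/-- The set of admissible `λ` in the Luxemburg norm of the sequence `c`
in the two-weighted Orlicz sequence space with Orlicz function `Φ` and
weights `v, u` (already aligned with the index set `ℕ`). -/
def luxSet (Φ : ℝ → ℝ) (v u : ℕ → ℝ) (c : ℕ → ℂ) : Set ℝ :=
  {lam : ℝ | 0 < lam ∧
    (∑' n : ℕ, ENNReal.ofReal (Φ (‖c n‖ * v n / lam)) * ENNReal.ofReal (u n)) ≤ 1}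

/-- The Luxemburg norm. -/
noncomputable def lux (Φ : ℝ → ℝ) (v u : ℕ → ℝ) (c : ℕ → ℂ) : ℝ :=
  sInf (luxSet Φ v u c)

section FourierPart
open AddCircle

variable {T : ℝ} [hT : Fact (0 < T)]

lemma fc_series_mul (c : ℤ → ℂ) (hc : Summable fun k => ‖c k‖) (h : AddCircle T → ℂ)
    (hh : Integrable h haarAddCircle) (n : ℤ) :
    fourierCoeff (fun t => (∑' k, c k * fourier k t) * h t) n
      = ∑' k, c k * fourierCoeff h (n - k) := by
  have key := hasSum_integral_of_summable_integral_norm (μ := haarAddCircle (T := T))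
    (F := fun (k : ℤ) t => c k * (fourier (-(n - k)) t • h t))
    (fun k => (hh.fourier_smul _).const_mul _) (by
      have : ∀ k : ℤ, ∫ t, ‖c k * (fourier (-(n - k)) t • h t)‖ ∂(haarAddCircle (T := T))
          = ‖c k‖ * ∫ t, ‖h t‖ ∂(haarAddCircle (T := T)) := by
        intro k
        rw [← integral_const_mul]
        congr 1
        ext t
        rw [norm_mul, norm_smul, fourier_apply, Circle.norm_coe, one_mul]
      simp_rw [this]
      exact hc.mul_right _)
  have h2 := key.tsum_eq
  simp_rw [integral_const_mul] at h2
  unfold fourierCoeff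
  rw [h2]
  congr 1
  ext t
  beta_reduce
  rw [smul_eq_mul, ← tsum_mul_right, ← tsum_mul_left]
  congr 1
  ext k
  rw [show -(n - k) = -n + k by ring, fourier_add, smul_eq_mul]
  ring

lemma fc_unique (h : AddCircle T → ℂ) (hh : Integrable h haarAddCircle)
    (h0 : ∀ n, fourierCoeff h n = 0) : h =ᵐ[haarAddCircle] 0 := by
  have hpInt : ∀ p : C(AddCircle T, ℂ), Integrable (fun t => p t * h t) haarAddCircle := by
    intro p
    apply hh.bdd_mul (c := ‖p‖) p.continuous.aestronglyMeasurable
    exact ae_of_all _ fun t => p.norm_coe_le_norm t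
  have hcont : ∀ p : C(AddCircle T, ℂ), ∫ t, p t * h t ∂haarAddCircle = 0 := by
    let L : C(AddCircle T, ℂ) →ₗ[ℂ] ℂ :=
      { toFun := fun p => ∫ t, p t * h t ∂haarAddCircle
        map_add' := fun p q => by
          rw [← integral_add (hpInt p) (hpInt q)]
          congr 1; ext t; simp [add_mul]
        map_smul' := fun a p => by
          rw [RingHom.id_apply, smul_eq_mul, ← integral_const_mul]
          congr 1; ext t; simp [mul_assoc] }
    have hb : ∀ p, ‖L p‖ ≤ (∫ t, ‖h t‖ ∂haarAddCircle) * ‖p‖ := by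
      intro p
      refine (norm_integral_le_integral_norm _).trans ?_
      rw [← integral_mul_const]
      refine integral_mono (hpInt p).norm (hh.norm.mul_const _) fun t => ?_
      simp only [norm_mul]
      rw [mul_comm]
      exact mul_le_mul_of_nonneg_left (p.norm_coe_le_norm t) (norm_nonneg _)
    let L' := L.mkContinuous _ hb
    have hcl : IsClosed (L'.ker : Set C(AddCircle T, ℂ)) := L'.isClosed_ker
    have hle : (Submodule.span ℂ (Set.range (@fourier T))).topologicalClosure ≤ L'.ker := by
      apply Submodule.topologicalClosure_minimal _ _ hcl
      rw [Submodule.span_le]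
      rintro _ ⟨n, rfl⟩
      have := h0 (-n)
      simp only [fourierCoeff, neg_neg, smul_eq_mul] at this
      exact this
    intro p
    rw [span_fourier_closure_eq_top] at hle
    exact hle (Submodule.mem_top (x := p))
  apply ae_eq_zero_of_forall_setIntegral_isClosed_eq_zero hh
  intro s hs
  have hpos : ∀ n : ℕ, (0 : ℝ) < 1 / ((n : ℝ) + 1) := fun n => by positivity
  have hlim := thickenedIndicator_tendsto_indicator_closure hpos
    tendsto_one_div_add_atTop_nhds_zero_nat s
  rw [tendsto_pi_nhds, hs.closure_eq] at hlim
  have hz : ∀ n : ℕ, ∫ t, ((thickenedIndicator (hpos n) s t : ℝ) : ℂ) * h t ∂haarAddCircle = 0 :=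
    fun n => hcont ⟨fun t => ((thickenedIndicator (hpos n) s t : ℝ) : ℂ), by fun_prop⟩
  have ht : Tendsto (fun n : ℕ => ∫ t, ((thickenedIndicator (hpos n) s t : ℝ) : ℂ) * h t
      ∂haarAddCircle) atTop (nhds (∫ t, s.indicator h t ∂haarAddCircle)) := by
    apply tendsto_integral_of_dominated_convergence (fun t => ‖h t‖)
    · intro n
      exact (hpInt ⟨fun t => ((thickenedIndicator (hpos n) s t : ℝ) : ℂ), by fun_prop⟩).1
    · exact hh.norm
    · intro n
      refine ae_of_all _ fun t => ?_
      rw [norm_mul]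
      have : ‖((thickenedIndicator (hpos n) s t : ℝ) : ℂ)‖ ≤ 1 := by
        rw [Complex.norm_real]
        simpa using thickenedIndicator_le_one (hpos n) s t
      exact mul_le_of_le_one_left (norm_nonneg _) this
    · refine ae_of_all _ fun t => ?_
      have h1 := hlim t
      have h2 : Tendsto (fun n : ℕ => ((thickenedIndicator (hpos n) s t : ℝ) : ℂ) * h t) atTop
          (nhds ((((s.indicator (fun _ => (1 : NNReal)) t : NNReal) : ℝ) : ℂ) * h t)) := by
        refine Tendsto.mul_const _ ?_
        exact (Complex.continuous_ofReal.comp NNReal.continuous_coe).tendsto _ |>.comp h1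
      convert h2 using 2
      by_cases hts : t ∈ s <;> simp [hts]
  simp_rw [hz] at ht
  rw [← integral_indicator hs.measurableSet]
  exact (tendsto_nhds_unique ht tendsto_const_nhds)

lemma fc_mul (f g : AddCircle T → ℂ) (hf : Integrable f haarAddCircle)
    (hg : Integrable g haarAddCircle) (hfW : Summable fun k : ℤ => ‖fourierCoeff f k‖) (n : ℤ) :
    fourierCoeff (f * g) n = ∑' k, fourierCoeff f k * fourierCoeff g (n - k) := by
  rw [← fc_series_mul _ hfW g hg n]
  set F : AddCircle T → ℂ := fun t => ∑' k, fourierCoeff f k * fourier k t with hF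
  have hFc : Continuous F := by
    apply continuous_tsum (fun k => by fun_prop) hfW
    intro k t
    rw [norm_mul, fourier_apply, Circle.norm_coe, mul_one]
  have hFi : Integrable F haarAddCircle :=
    hFc.integrable_of_hasCompactSupport (HasCompactSupport.of_compactSpace F)
  have hFcoef : ∀ n, fourierCoeff F n = fourierCoeff f n := by
    intro n
    have h1 := fc_series_mul _ hfW (fourier 0 : C(AddCircle T, ℂ))
      ((fourier 0 : C(AddCircle T, ℂ)).continuous.integrable_of_hasCompactSupport
        (HasCompactSupport.of_compactSpace _)) n
    simp only [fourier_zero, mul_one] at h1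
    rw [hF, h1, fourierCoeff_fourier, tsum_eq_single n]
    · simp
    · intro k hk
      rw [Pi.single_eq_of_ne (by omega), mul_zero]
  have hae : f =ᵐ[haarAddCircle] F := by
    have := fc_unique (f - F) (hf.sub hFi) (fun n => by
      have h2 : fourierCoeff (f - F) n = fourierCoeff f n - fourierCoeff F n := by
        unfold fourierCoeff
        rw [← integral_sub (hf.fourier_smul _) (hFi.fourier_smul _)]
        congr 1; ext t; simp only [Pi.sub_apply, smul_sub]
      rw [h2, hFcoef, sub_self])
    filter_upwards [this] with t ht
    exact sub_eq_zero.1 ht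
  refine congrFun (fourierCoeff_congr_ae ?_) n
  filter_upwards [hae] with t ht
  simp only [Pi.mul_apply, ht]; rfl

end FourierPart

section LuxPart

lemma orlicz_nonneg {Φ : ℝ → ℝ} (hm : MonotoneOn Φ (Set.Ici 0)) (h0 : Φ 0 = 0) {x : ℝ}
    (hx : 0 ≤ x) : 0 ≤ Φ x := by
  rw [← h0]; exact hm (Set.mem_Ici.2 le_rfl) hx hx

lemma orlicz_jensen {Φ : ℝ → ℝ} (hconv : ConvexOn ℝ (Set.Ici 0) Φ) (h0 : Φ 0 = 0)
    {ι : Type*} (s : Finset ι) (p x : ι → ℝ) (hp : ∀ i, 0 ≤ p i) (hx : ∀ i, 0 ≤ x i)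
    (hs : ∑ i ∈ s, p i ≤ 1) : Φ (∑ i ∈ s, p i * x i) ≤ ∑ i ∈ s, p i * Φ (x i) := by
  have := hconv.map_add_sum_le (t := s) (w := p) (p := x) (v := 1 - ∑ i ∈ s, p i) (q := 0)
    (fun i _ => hp i) (by ring) (fun i _ => hx i) (by linarith) (Set.mem_Ici.2 le_rfl)
  simpa [h0] using this

/-- Core estimate at a single index. -/
lemma lux_core_point {Φ : ℝ → ℝ} (hc : Continuous Φ) (hm : MonotoneOn Φ (Set.Ici 0))
    (hconv : ConvexOn ℝ (Set.Ici 0) Φ) (h0 : Φ 0 = 0)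
    (ι : ℕ → ℤ) (hι : Function.Injective ι) (v u : ℕ → ℝ) (hv : ∀ n, 0 < v n) (hu : ∀ n, 0 < u n)
    (Cv Cu : ℝ) (hCv : 1 ≤ Cv) (hCu : 1 ≤ Cu)
    (n : ℕ)
    (hsplit : ∀ j : ℤ, (∃ m, ι m = j ∧ v n ≤ Cv * v m ∧ u n ≤ Cu * u m) ∨
      (∃ m, ι m = ι n - j ∧ v n ≤ Cv * v m ∧ u n ≤ Cu * u m))
    (F G : ℤ → ℝ) (hF : ∀ j, 0 ≤ F j) (hG : ∀ j, 0 ≤ G j) (hFs : Summable F) (hGs : Summable G)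
    (S T a b : ℝ) (hS : ∑' j, F j ≤ S) (hT : ∑' j, G j ≤ T) (hS0 : 0 < S) (hT0 : 0 < T)
    (ha : 0 < a) (hb : 0 < b) :
    ENNReal.ofReal (Φ ((∑' j, F j * G (ι n - j)) * v n / (Cv * Cu * (a * T + b * S))))
        * ENNReal.ofReal (u n) ≤
      ∑' j : ℤ, (ENNReal.ofReal (a / (a * T + b * S) * G (ι n - j)) * Function.extend ι
          (fun m => ENNReal.ofReal (Φ (F (ι m) * v m / a)) * ENNReal.ofReal (u m)) 0 j +
        ENNReal.ofReal (b / (a * T + b * S) * F j) * Function.extend ι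
          (fun m => ENNReal.ofReal (Φ (G (ι m) * v m / b)) * ENNReal.ofReal (u m)) 0 (ι n - j)) := by
  set E := a * T + b * S with hE
  have hE0 : 0 < E := by positivity
  set R : ℤ → ℝ≥0∞ := fun j => (ENNReal.ofReal (a / E * G (ι n - j)) * Function.extend ι
          (fun m => ENNReal.ofReal (Φ (F (ι m) * v m / a)) * ENNReal.ofReal (u m)) 0 j +
        ENNReal.ofReal (b / E * F j) * Function.extend ι
          (fun m => ENNReal.ofReal (Φ (G (ι m) * v m / b)) * ENNReal.ofReal (u m)) 0 (ι n - j))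
    with hR
  have hGr : Summable fun j => G (ι n - j) := (Equiv.subLeft (ι n)).summable_iff.2 hGs
  have hGt : ∑' j, G (ι n - j) ≤ T := by
    have := (Equiv.subLeft (ι n)).tsum_eq G
    simp only [Equiv.subLeft_apply] at this
    rw [this]; exact hT
  have hsum : Summable fun j => F j * G (ι n - j) := by
    have hGb : ∀ j, G (ι n - j) ≤ T := fun j =>
      (hGs.le_tsum _ (fun i _ => hG i)).trans hT
    refine Summable.of_nonneg_of_le (fun j => mul_nonneg (hF j) (hG _))
      (fun j => mul_le_mul_of_nonneg_left (hGb j) (hF j)) (hFs.mul_right T)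
  -- choice of Jensen data
  have hch : ∀ j : ℤ, ∃ p x : ℝ, 0 ≤ p ∧ 0 ≤ x ∧
      F j * G (ι n - j) * v n / (Cv * Cu * E) ≤ p * x ∧
      p ≤ a / E * G (ι n - j) + b / E * F j ∧
      ENNReal.ofReal (p * Φ x) * ENNReal.ofReal (u n) ≤ R j := by
    intro j
    have aux : ∀ (α y z : ℝ) (m : ℕ), 0 < α → 0 ≤ y → 0 ≤ z → v n ≤ Cv * v m → u n ≤ Cu * u m →
        0 ≤ α / E * y / Cu ∧ 0 ≤ z * v m / α ∧
        z * y * v n / (Cv * Cu * E) ≤ (α / E * y / Cu) * (z * v m / α) ∧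
        α / E * y / Cu ≤ α / E * y ∧
        ENNReal.ofReal ((α / E * y / Cu) * Φ (z * v m / α)) * ENNReal.ofReal (u n) ≤
          ENNReal.ofReal (α / E * y) *
            (ENNReal.ofReal (Φ (z * v m / α)) * ENNReal.ofReal (u m)) := by
      intro α y z m hα hy hz h1 h2
      have hvm := hv m
      have hum := hu m
      have hx : 0 ≤ z * v m / α := by positivity
      have hΦx := orlicz_nonneg hm h0 hx
      refine ⟨by positivity, hx, ?_, ?_, ?_⟩
      · rw [show (α / E * y / Cu) * (z * v m / α) = z * y * (Cv * v m) / (Cv * Cu * E) by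
          field_simp]
        gcongr
      · exact div_le_self (by positivity) hCu
      · rw [← ENNReal.ofReal_mul (by positivity), ← ENNReal.ofReal_mul (by positivity),
          ← ENNReal.ofReal_mul (by positivity)]
        apply ENNReal.ofReal_le_ofReal
        calc (α / E * y / Cu) * Φ (z * v m / α) * u n
            ≤ (α / E * y / Cu) * Φ (z * v m / α) * (Cu * u m) := by gcongr
          _ = _ := by field_simp
    rcases hsplit j with ⟨m, hmj, h1, h2⟩ | ⟨m, hmj, h1, h2⟩
    · obtain ⟨k1, k2, k3, k4, k5⟩ := aux a (G (ι n - j)) (F j) m ha (hG _) (hF _) h1 h2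
      refine ⟨_, _, k1, k2, k3, k4.trans ?_, k5.trans ?_⟩
      · have := hF j
        have : 0 ≤ b / E * F j := by positivity
        linarith
      · simp only [hR]
        rw [← hmj, hι.extend_apply]
        exact le_self_add
    · obtain ⟨k1, k2, k3, k4, k5⟩ := aux b (F j) (G (ι n - j)) m hb (hF _) (hG _) h1 h2
      refine ⟨_, _, k1, k2, by rw [mul_comm (F j)]; exact k3, k4.trans ?_, k5.trans ?_⟩
      · have := hG (ι n - j)
        have : 0 ≤ a / E * G (ι n - j) := by positivity
        linarith
      · simp only [hR]
        rw [← hmj, hι.extend_apply]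
        exact le_add_self
  choose p x hp hx hpx hpb hpR using hch
  have hvn := hv n
  have hfin : ∀ s : Finset ℤ,
      ENNReal.ofReal (Φ ((∑ j ∈ s, F j * G (ι n - j)) * v n / (Cv * Cu * E)))
        * ENNReal.ofReal (u n) ≤ ∑' j, R j := by
    intro s
    have hp1 : ∑ j ∈ s, p j ≤ 1 := by
      calc ∑ j ∈ s, p j ≤ ∑ j ∈ s, (a / E * G (ι n - j) + b / E * F j) :=
            Finset.sum_le_sum fun j _ => hpb j
        _ = a / E * ∑ j ∈ s, G (ι n - j) + b / E * ∑ j ∈ s, F j := by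
            rw [Finset.sum_add_distrib, Finset.mul_sum, Finset.mul_sum]
        _ ≤ a / E * T + b / E * S := by
            gcongr
            · exact (hGr.sum_le_tsum s fun j _ => hG _).trans hGt
            · exact (hFs.sum_le_tsum s fun j _ => hF _).trans hS
        _ = 1 := by
            rw [div_mul_eq_mul_div, div_mul_eq_mul_div, ← add_div, ← hE, div_self hE0.ne']
    have hle : (∑ j ∈ s, F j * G (ι n - j)) * v n / (Cv * Cu * E) ≤ ∑ j ∈ s, p j * x j := by
      rw [Finset.sum_mul, Finset.sum_div]
      exact Finset.sum_le_sum fun j _ => hpx j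
    have hnn : 0 ≤ (∑ j ∈ s, F j * G (ι n - j)) * v n / (Cv * Cu * E) := by
      have : 0 ≤ ∑ j ∈ s, F j * G (ι n - j) :=
        Finset.sum_nonneg fun j _ => mul_nonneg (hF _) (hG _)
      positivity
    have hΦ := (hm hnn (hnn.trans hle) hle).trans (orlicz_jensen hconv h0 s p x hp hx hp1)
    calc _ ≤ ENNReal.ofReal (∑ j ∈ s, p j * Φ (x j)) * ENNReal.ofReal (u n) := by gcongr
      _ = ∑ j ∈ s, ENNReal.ofReal (p j * Φ (x j)) * ENNReal.ofReal (u n) := by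
          rw [ENNReal.ofReal_sum_of_nonneg fun j _ =>
            mul_nonneg (hp j) (orlicz_nonneg hm h0 (hx j)), Finset.sum_mul]
      _ ≤ ∑ j ∈ s, R j := Finset.sum_le_sum fun j _ => hpR j
      _ ≤ ∑' j, R j := ENNReal.sum_le_tsum s
  have hcont : Continuous fun y : ℝ =>
      ENNReal.ofReal (Φ (y * v n / (Cv * Cu * E))) * ENNReal.ofReal (u n) := by
    refine (ENNReal.continuous_mul_const ENNReal.ofReal_ne_top).comp ?_
    exact ENNReal.continuous_ofReal.comp (by fun_prop)
  exact le_of_tendsto' ((hcont.tendsto _).comp hsum.hasSum) hfin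

lemma tsum_extend_le (ι : ℕ → ℤ) (hι : Function.Injective ι) (Q : ℕ → ℝ≥0∞) :
    ∑' j, Function.extend ι Q 0 j = ∑' m, Q m :=
  ((hasSum_extend_zero hι).2 ENNReal.summable.hasSum).tsum_eq

lemma lux_core {Φ : ℝ → ℝ} (hc : Continuous Φ) (hm : MonotoneOn Φ (Set.Ici 0))
    (hconv : ConvexOn ℝ (Set.Ici 0) Φ) (h0 : Φ 0 = 0)
    (ι : ℕ → ℤ) (hι : Function.Injective ι) (v u : ℕ → ℝ) (hv : ∀ n, 0 < v n) (hu : ∀ n, 0 < u n)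
    (Cv Cu : ℝ) (hCv : 1 ≤ Cv) (hCu : 1 ≤ Cu)
    (hsplit : ∀ n, ∀ j : ℤ, (∃ m, ι m = j ∧ v n ≤ Cv * v m ∧ u n ≤ Cu * u m) ∨
      (∃ m, ι m = ι n - j ∧ v n ≤ Cv * v m ∧ u n ≤ Cu * u m))
    (f g h : ℤ → ℂ) (hFs : Summable fun j => ‖f j‖) (hGs : Summable fun j => ‖g j‖)
    (hh : ∀ n, ‖h n‖ ≤ ∑' j, ‖f j‖ * ‖g (n - j)‖)
    (S T a b : ℝ) (hS : ∑' j, ‖f j‖ ≤ S) (hT : ∑' j, ‖g j‖ ≤ T) (hS0 : 0 < S) (hT0 : 0 < T)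
    (ha : a ∈ luxSet Φ v u (fun n => f (ι n))) (hb : b ∈ luxSet Φ v u (fun n => g (ι n))) :
    Cv * Cu * (a * T + b * S) ∈ luxSet Φ v u (fun n => h (ι n)) := by
  obtain ⟨ha, haQ⟩ := ha
  obtain ⟨hb, hbQ⟩ := hb
  have hE0 : 0 < a * T + b * S := by positivity
  refine ⟨by positivity, ?_⟩
  set E := a * T + b * S with hE
  set P := Function.extend ι
    (fun m => ENNReal.ofReal (Φ (‖f (ι m)‖ * v m / a)) * ENNReal.ofReal (u m)) 0 with hP
  set Q := Function.extend ι
    (fun m => ENNReal.ofReal (Φ (‖g (ι m)‖ * v m / b)) * ENNReal.ofReal (u m)) 0 with hQ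
  have hP1 : ∑' j, P j ≤ 1 := by rw [hP, tsum_extend_le ι hι]; exact haQ
  have hQ1 : ∑' j, Q j ≤ 1 := by rw [hQ, tsum_extend_le ι hι]; exact hbQ
  have hinj : ∀ j : ℤ, Function.Injective fun n => ι n - j := fun j x y hxy =>
    hι (by simpa using hxy)
  have hpt : ∀ n, ENNReal.ofReal (Φ (‖h (ι n)‖ * v n / (Cv * Cu * E))) * ENNReal.ofReal (u n) ≤
      ∑' j : ℤ, (ENNReal.ofReal (a / E * ‖g (ι n - j)‖) * P j +
        ENNReal.ofReal (b / E * ‖f j‖) * Q (ι n - j)) := by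
    intro n
    refine le_trans ?_ (lux_core_point hc hm hconv h0 ι hι v u hv hu Cv Cu hCv hCu n (hsplit n)
      (fun j => ‖f j‖) (fun j => ‖g j‖) (fun _ => norm_nonneg _) (fun _ => norm_nonneg _)
      hFs hGs S T a b hS hT hS0 hT0 ha hb)
    have hvn := hv n
    have hle : ‖h (ι n)‖ * v n / (Cv * Cu * E) ≤
        (∑' j, ‖f j‖ * ‖g (ι n - j)‖) * v n / (Cv * Cu * E) := by
      gcongr
      exact hh _
    have hnn : 0 ≤ ‖h (ι n)‖ * v n / (Cv * Cu * E) := by positivity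
    gcongr
    exact hm hnn (hnn.trans hle) hle
  calc _ ≤ ∑' n, ∑' j : ℤ, (ENNReal.ofReal (a / E * ‖g (ι n - j)‖) * P j +
        ENNReal.ofReal (b / E * ‖f j‖) * Q (ι n - j)) := ENNReal.tsum_le_tsum hpt
    _ = ∑' j : ℤ, ((∑' n, ENNReal.ofReal (a / E * ‖g (ι n - j)‖)) * P j +
        ENNReal.ofReal (b / E * ‖f j‖) * ∑' n, Q (ι n - j)) := by
        rw [ENNReal.tsum_comm]
        congr 1; ext j
        rw [ENNReal.tsum_add, ENNReal.tsum_mul_right, ENNReal.tsum_mul_left]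
    _ ≤ ∑' j : ℤ, (ENNReal.ofReal (a / E * T) * P j + ENNReal.ofReal (b / E * ‖f j‖) * 1) := by
        refine ENNReal.tsum_le_tsum fun j => ?_
        gcongr
        · calc _ ≤ ∑' k, ENNReal.ofReal (a / E * ‖g k‖) :=
                ENNReal.tsum_comp_le_tsum_of_injective (hinj j)
                  (fun k => ENNReal.ofReal (a / E * ‖g k‖))
            _ = ENNReal.ofReal (∑' k, a / E * ‖g k‖) :=
                (ENNReal.ofReal_tsum_of_nonneg (fun k => by positivity) (hGs.mul_left _)).symm
            _ ≤ _ := by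
                apply ENNReal.ofReal_le_ofReal
                rw [tsum_mul_left]
                gcongr
        · exact (ENNReal.tsum_comp_le_tsum_of_injective (hinj j) Q).trans hQ1
    _ = ENNReal.ofReal (a / E * T) * ∑' j, P j + ENNReal.ofReal (∑' j, b / E * ‖f j‖) := by
        rw [ENNReal.tsum_add, ENNReal.tsum_mul_left,
          ENNReal.ofReal_tsum_of_nonneg (fun k => by positivity) (hFs.mul_left _)]
        simp
    _ ≤ ENNReal.ofReal (a / E * T) * 1 + ENNReal.ofReal (b / E * S) := by
        gcongr
        rw [tsum_mul_left]
        gcongr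
    _ = 1 := by
        rw [mul_one, ← ENNReal.ofReal_add (by positivity) (by positivity), div_mul_eq_mul_div,
          div_mul_eq_mul_div, ← add_div, ← hE, div_self hE0.ne', ENNReal.ofReal_one]

lemma lux_nonneg (Φ : ℝ → ℝ) (v u : ℕ → ℝ) (c : ℕ → ℂ) : 0 ≤ lux Φ v u c :=
  Real.sInf_nonneg fun _ hx => hx.1.le

lemma lux_le {Φ : ℝ → ℝ} {v u : ℕ → ℝ} {c : ℕ → ℂ} {x : ℝ} (hx : x ∈ luxSet Φ v u c) :
    lux Φ v u c ≤ x := csInf_le ⟨0, fun _ hx => hx.1.le⟩ hx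

lemma lux_main {Φ : ℝ → ℝ} (hc : Continuous Φ) (hm : MonotoneOn Φ (Set.Ici 0))
    (hconv : ConvexOn ℝ (Set.Ici 0) Φ) (h0 : Φ 0 = 0)
    (ι : ℕ → ℤ) (hι : Function.Injective ι) (v u : ℕ → ℝ) (hv : ∀ n, 0 < v n) (hu : ∀ n, 0 < u n)
    (Cv Cu : ℝ) (hCv : 1 ≤ Cv) (hCu : 1 ≤ Cu)
    (hsplit : ∀ n, ∀ j : ℤ, (∃ m, ι m = j ∧ v n ≤ Cv * v m ∧ u n ≤ Cu * u m) ∨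
      (∃ m, ι m = ι n - j ∧ v n ≤ Cv * v m ∧ u n ≤ Cu * u m))
    (f g h : ℤ → ℂ) (hFs : Summable fun j => ‖f j‖) (hGs : Summable fun j => ‖g j‖)
    (hh : ∀ n, ‖h n‖ ≤ ∑' j, ‖f j‖ * ‖g (n - j)‖)
    (ha : (luxSet Φ v u (fun n => f (ι n))).Nonempty)
    (hb : (luxSet Φ v u (fun n => g (ι n))).Nonempty) :
    (luxSet Φ v u (fun n => h (ι n))).Nonempty ∧
    lux Φ v u (fun n => h (ι n)) ≤ Cv * Cu * (lux Φ v u (fun n => f (ι n)) * ∑' j, ‖g j‖ +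
      lux Φ v u (fun n => g (ι n)) * ∑' j, ‖f j‖) := by
  set S := ∑' j, ‖f j‖ with hS
  set T := ∑' j, ‖g j‖ with hT
  have hS0 : 0 ≤ S := tsum_nonneg fun _ => norm_nonneg _
  have hT0 : 0 ≤ T := tsum_nonneg fun _ => norm_nonneg _
  set A := lux Φ v u (fun n => f (ι n)) with hA
  set B := lux Φ v u (fun n => g (ι n)) with hB
  have key := fun ε (hε : 0 < ε) a b => lux_core hc hm hconv h0 ι hι v u hv hu Cv Cu hCv hCu
    hsplit f g h hFs hGs hh (S + ε) (T + ε) a b (by linarith) (by linarith) (by linarith)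
    (by linarith)
  constructor
  · obtain ⟨a, ha⟩ := ha
    obtain ⟨b, hb⟩ := hb
    exact ⟨_, key 1 one_pos a b ha hb⟩
  · have hev : ∀ ε : ℝ, 0 < ε → lux Φ v u (fun n => h (ι n)) ≤
        Cv * Cu * ((A + ε) * (T + ε) + (B + ε) * (S + ε)) := by
      intro ε hε
      obtain ⟨a, ha1, ha2⟩ := Real.lt_sInf_add_pos ha hε
      obtain ⟨b, hb1, hb2⟩ := Real.lt_sInf_add_pos hb hε
      refine (lux_le (key ε hε a b ha1 hb1)).trans ?_
      have ha3 : a ≤ A + ε := ha2.le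
      have hb3 : b ≤ B + ε := hb2.le
      gcongr
    have hlim : Tendsto (fun ε : ℝ => Cv * Cu * ((A + ε) * (T + ε) + (B + ε) * (S + ε)))
        (nhdsWithin 0 (Set.Ioi 0)) (nhds (Cv * Cu * (A * T + B * S))) := by
      have : Continuous (fun ε : ℝ => Cv * Cu * ((A + ε) * (T + ε) + (B + ε) * (S + ε))) := by
        fun_prop
      have h2 := (this.tendsto 0).mono_left (nhdsWithin_le_nhds (s := Set.Ioi 0))
      simpa using h2
    refine ge_of_tendsto hlim ?_
    filter_upwards [self_mem_nhdsWithin] with ε hε using hev ε hε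

lemma conv_tsum (F G : ℤ → ℝ) (hF : ∀ j, 0 ≤ F j) (hG : ∀ j, 0 ≤ G j) (hFs : Summable F)
    (hGs : Summable G) (h : ℤ → ℂ) (hh : ∀ n, ‖h n‖ ≤ ∑' j, F j * G (n - j)) :
    (Summable fun n => ‖h n‖) ∧ ∑' n, ‖h n‖ ≤ (∑' j, F j) * ∑' j, G j := by
  have hprod : Summable fun q : ℤ × ℤ => F q.1 * G q.2 := hFs.mul_of_nonneg hGs hF hG
  let e : ℤ × ℤ ≃ ℤ × ℤ :=
    { toFun := fun q => (q.2, q.1 - q.2)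
      invFun := fun q => (q.1 + q.2, q.1)
      left_inv := fun q => by simp
      right_inv := fun q => by simp }
  have h2 : Summable fun q : ℤ × ℤ => F q.2 * G (q.1 - q.2) := e.summable_iff.2 hprod
  have h3 : Summable fun n : ℤ => ∑' j, F j * G (n - j) := h2.prod
  have h4 : ∑' n : ℤ, ∑' j, F j * G (n - j) = (∑' j, F j) * ∑' j, G j := by
    rw [hFs.tsum_mul_tsum hGs hprod, ← e.tsum_eq (fun q : ℤ × ℤ => F q.1 * G q.2)]
    exact (h2.tsum_prod).symm
  have h5 : Summable fun n => ‖h n‖ := Summable.of_nonneg_of_le (fun _ => norm_nonneg _) hh h3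
  exact ⟨h5, h4 ▸ h5.tsum_le_tsum hh h3⟩

end LuxPart

section WeightPart

lemma wt_const_one (ν : ℕ → ℝ) (C : ℝ) (hpos : ∀ n, 1 ≤ n → 0 < ν n)
    (hmono : ∀ n, 1 ≤ n → ν n ≤ ν (n + 1)) (hd : ∀ n, 1 ≤ n → ν (2 * n) ≤ C * ν n) : 1 ≤ C := by
  have h1 := hpos 1 le_rfl
  have h2 := (hmono 1 le_rfl).trans (hd 1 le_rfl)
  by_contra hC
  nlinarith

lemma wt_double (ν : ℕ → ℝ) (C : ℝ)
    (hmono : ∀ n, 1 ≤ n → ν n ≤ ν (n + 1)) (hd : ∀ n, 1 ≤ n → ν (2 * n) ≤ C * ν n)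
    (n m : ℕ) (hn : 1 ≤ n) (hnm : n ≤ 2 * m) : ν n ≤ C * ν m := by
  have hm : ν n ≤ ν (2 * m) := by
    exact Nat.le_induction (P := fun k _ => ν n ≤ ν k) le_rfl
      (fun k hk ih => ih.trans (hmono k (hn.trans hk))) _ hnm
  exact hm.trans (hd m (by omega))

lemma wt_double' (ν : ℕ → ℝ) (C : ℝ) (hpos : ∀ n, 0 < ν n)
    (hmono : ∀ n, ν n ≤ ν (n + 1)) (hd : ∀ n, 1 ≤ n → ν (2 * n) ≤ C * ν n)
    (n m : ℕ) (hnm : n ≤ 2 * m) : ν n ≤ C * ν m := by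
  have hC := wt_const_one ν C (fun n _ => hpos n) (fun n _ => hmono n) hd
  rcases Nat.eq_zero_or_pos n with rfl | hn
  · have h1 : ν 0 ≤ ν m := monotone_nat_of_le_succ hmono (Nat.zero_le m)
    exact h1.trans (le_mul_of_one_le_left (hpos m).le hC)
  · exact wt_double ν C (fun n _ => hmono n) hd n m hn hnm

end WeightPart

/-- Main theorem: for Orlicz functions `Φ, Ψ` and positive nondecreasing
Δ₂-weight sequences `φ, w` (indexed by `n ≥ 1`) and `ψ, ϱ` (indexed by
`n ≥ 0`), the norm `‖f‖ = ‖f‖_W + ‖f‖₋ + ‖f‖₊` on `L¹(𝕋)` (Wiener norm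
plus the Luxemburg norms of the negative and nonnegative Fourier
coefficients) satisfies `‖fg‖ ≤ C ‖f‖ ‖g‖` with
`C = 1 + 2(1+C_w)C_φ + 2(1+C_ϱ)C_ψ` whenever `‖f‖, ‖g‖ < ∞`. -/
theorem stmt_7 (Φ Ψ : ℝ → ℝ)
    (hΦc : Continuous Φ) (hΦm : MonotoneOn Φ (Set.Ici 0))
    (hΦconv : ConvexOn ℝ (Set.Ici 0) Φ) (hΦ0 : Φ 0 = 0)
    (hΦtop : Tendsto Φ atTop atTop)
    (hΨc : Continuous Ψ) (hΨm : MonotoneOn Ψ (Set.Ici 0))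
    (hΨconv : ConvexOn ℝ (Set.Ici 0) Ψ) (hΨ0 : Ψ 0 = 0)
    (hΨtop : Tendsto Ψ atTop atTop)
    (φ w : ℕ → ℝ) (Cφ Cw : ℝ)
    (hφpos : ∀ n, 1 ≤ n → 0 < φ n) (hφmono : ∀ n, 1 ≤ n → φ n ≤ φ (n + 1))
    (hφΔ₂ : ∀ n, 1 ≤ n → φ (2 * n) ≤ Cφ * φ n)
    (hwpos : ∀ n, 1 ≤ n → 0 < w n) (hwmono : ∀ n, 1 ≤ n → w n ≤ w (n + 1))
    (hwΔ₂ : ∀ n, 1 ≤ n → w (2 * n) ≤ Cw * w n)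
    (ψ ϱ : ℕ → ℝ) (Cψ Cϱ : ℝ)
    (hψpos : ∀ n, 0 < ψ n) (hψmono : ∀ n, ψ n ≤ ψ (n + 1))
    (hψΔ₂ : ∀ n, 1 ≤ n → ψ (2 * n) ≤ Cψ * ψ n)
    (hϱpos : ∀ n, 0 < ϱ n) (hϱmono : ∀ n, ϱ n ≤ ϱ (n + 1))
    (hϱΔ₂ : ∀ n, 1 ≤ n → ϱ (2 * n) ≤ Cϱ * ϱ n)
    (f g : AddCircle (2 * Real.pi) → ℂ)
    (hf : Integrable f AddCircle.haarAddCircle)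
    (hg : Integrable g AddCircle.haarAddCircle)
    -- `‖f‖ < ∞` :
    (hfW : Summable fun k : ℤ => ‖fourierCoeff f k‖)
    (hfm : (luxSet Φ (fun n => φ (n + 1)) (fun n => w (n + 1))
        (fun n => fourierCoeff f (-((n : ℤ) + 1)))).Nonempty)
    (hfp : (luxSet Ψ ψ ϱ (fun n => fourierCoeff f (n : ℤ))).Nonempty)
    -- `‖g‖ < ∞` :
    (hgW : Summable fun k : ℤ => ‖fourierCoeff g k‖)
    (hgm : (luxSet Φ (fun n => φ (n + 1)) (fun n => w (n + 1))
        (fun n => fourierCoeff g (-((n : ℤ) + 1)))).Nonempty)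
    (hgp : (luxSet Ψ ψ ϱ (fun n => fourierCoeff g (n : ℤ))).Nonempty) :
    -- `‖fg‖ < ∞` and `‖fg‖ ≤ C ‖f‖ ‖g‖` :
    (Summable fun k : ℤ => ‖fourierCoeff (f * g) k‖) ∧
    (luxSet Φ (fun n => φ (n + 1)) (fun n => w (n + 1))
        (fun n => fourierCoeff (f * g) (-((n : ℤ) + 1)))).Nonempty ∧
    (luxSet Ψ ψ ϱ (fun n => fourierCoeff (f * g) (n : ℤ))).Nonempty ∧
    (∑' k : ℤ, ‖fourierCoeff (f * g) k‖) +
      lux Φ (fun n => φ (n + 1)) (fun n => w (n + 1))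
        (fun n => fourierCoeff (f * g) (-((n : ℤ) + 1))) +
      lux Ψ ψ ϱ (fun n => fourierCoeff (f * g) (n : ℤ))
      ≤ (1 + 2 * (1 + Cw) * Cφ + 2 * (1 + Cϱ) * Cψ) *
        ((∑' k : ℤ, ‖fourierCoeff f k‖) +
          lux Φ (fun n => φ (n + 1)) (fun n => w (n + 1))
            (fun n => fourierCoeff f (-((n : ℤ) + 1))) +
          lux Ψ ψ ϱ (fun n => fourierCoeff f (n : ℤ))) *
        ((∑' k : ℤ, ‖fourierCoeff g k‖) +
          lux Φ (fun n => φ (n + 1)) (fun n => w (n + 1))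
            (fun n => fourierCoeff g (-((n : ℤ) + 1))) +
          lux Ψ ψ ϱ (fun n => fourierCoeff g (n : ℤ))) := by
  have hconv : ∀ n, ‖fourierCoeff (f * g) n‖ ≤
      ∑' j, ‖fourierCoeff f j‖ * ‖fourierCoeff g (n - j)‖ := by
    intro n
    rw [fc_mul f g hf hg hfW n]
    have hs : Summable fun j => ‖fourierCoeff f j * fourierCoeff g (n - j)‖ := by
      simp_rw [norm_mul]
      refine Summable.of_nonneg_of_le (fun j => by positivity)
        (fun j => mul_le_mul_of_nonneg_left
          (hgW.le_tsum (n - j) (fun i _ => norm_nonneg _)) (norm_nonneg _)) (hfW.mul_right _)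
    simpa only [norm_mul] using norm_tsum_le_tsum_norm hs
  obtain ⟨hW, hWle⟩ := conv_tsum _ _ (fun _ => norm_nonneg _) (fun _ => norm_nonneg _) hfW hgW
    (fourierCoeff (f * g)) hconv
  have hCφ := wt_const_one φ Cφ hφpos hφmono hφΔ₂
  have hCw := wt_const_one w Cw hwpos hwmono hwΔ₂
  have hCψ := wt_const_one ψ Cψ (fun n _ => hψpos n) (fun n _ => hψmono n) hψΔ₂
  have hCϱ := wt_const_one ϱ Cϱ (fun n _ => hϱpos n) (fun n _ => hϱmono n) hϱΔ₂
  obtain ⟨hm1, hm2⟩ := lux_main hΦc hΦm hΦconv hΦ0 (fun n => -((n : ℤ) + 1))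
    (fun a b hab => by simpa using hab) (fun n => φ (n + 1)) (fun n => w (n + 1))
    (fun n => hφpos _ (by omega)) (fun n => hwpos _ (by omega)) Cφ Cw hCφ hCw (by
      intro n j
      by_cases hj : 2 * j ≤ -((n : ℤ) + 1)
      · exact Or.inl ⟨(-j - 1).toNat, by omega,
          wt_double φ Cφ hφmono hφΔ₂ _ _ (by omega) (by omega),
          wt_double w Cw hwmono hwΔ₂ _ _ (by omega) (by omega)⟩
      · exact Or.inr ⟨(n + j).toNat, by omega,
          wt_double φ Cφ hφmono hφΔ₂ _ _ (by omega) (by omega),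
          wt_double w Cw hwmono hwΔ₂ _ _ (by omega) (by omega)⟩)
    (fourierCoeff f) (fourierCoeff g) (fourierCoeff (f * g)) hfW hgW hconv hfm hgm
  obtain ⟨hp1, hp2⟩ := lux_main hΨc hΨm hΨconv hΨ0 (fun n => (n : ℤ))
    (fun a b hab => by simpa using hab) ψ ϱ hψpos hϱpos Cψ Cϱ hCψ hCϱ (by
      intro n j
      by_cases hj : (n : ℤ) ≤ 2 * j
      · exact Or.inl ⟨j.toNat, by omega,
          wt_double' ψ Cψ hψpos hψmono hψΔ₂ _ _ (by omega),
          wt_double' ϱ Cϱ hϱpos hϱmono hϱΔ₂ _ _ (by omega)⟩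
      · exact Or.inr ⟨(n - j).toNat, by omega,
          wt_double' ψ Cψ hψpos hψmono hψΔ₂ _ _ (by omega),
          wt_double' ϱ Cϱ hϱpos hϱmono hϱΔ₂ _ _ (by omega)⟩)
    (fourierCoeff f) (fourierCoeff g) (fourierCoeff (f * g)) hfW hgW hconv hfp hgp
  refine ⟨hW, hm1, hp1, ?_⟩
  have a1 := lux_nonneg Φ (fun n => φ (n + 1)) (fun n => w (n + 1))
    (fun n => fourierCoeff f (-((n : ℤ) + 1)))
  have a2 := lux_nonneg Φ (fun n => φ (n + 1)) (fun n => w (n + 1))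
    (fun n => fourierCoeff g (-((n : ℤ) + 1)))
  have a3 := lux_nonneg Ψ ψ ϱ (fun n => fourierCoeff f (n : ℤ))
  have a4 := lux_nonneg Ψ ψ ϱ (fun n => fourierCoeff g (n : ℤ))
  have a5 : 0 ≤ ∑' k, ‖fourierCoeff f k‖ := tsum_nonneg fun _ => norm_nonneg _
  have a6 : 0 ≤ ∑' k, ‖fourierCoeff g k‖ := tsum_nonneg fun _ => norm_nonneg _
  have fin : ∀ (z1 z2 z3 S A A' T B B' : ℝ), 0 ≤ S → 0 ≤ A → 0 ≤ A' → 0 ≤ T → 0 ≤ B → 0 ≤ B' →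
      z1 ≤ S * T → z2 ≤ Cφ * Cw * (A * T + B * S) → z3 ≤ Cψ * Cϱ * (A' * T + B' * S) →
      z1 + z2 + z3 ≤ (1 + 2 * (1 + Cw) * Cφ + 2 * (1 + Cϱ) * Cψ) * (S + A + A') *
        (T + B + B') := by
    intro z1 z2 z3 S A A' T B B' hS hA hA' hT hB hB' h1 h2 h3
    set N := (S + A + A') * (T + B + B') with hN
    have n1 : S * T ≤ N := by
      apply mul_le_mul <;> first | linarith | positivity
    have n2 : A * T + B * S ≤ N := by
      have : N = A * T + B * S + (S * T + S * B' + A * B + A * B' + A' * T + A' * B + A' * B') := by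
        rw [hN]; ring
      rw [this]
      exact le_add_of_nonneg_right (by positivity)
    have n3 : A' * T + B' * S ≤ N := by
      have : N = A' * T + B' * S +
          (S * T + S * B + A * T + A * B + A * B' + A' * B + A' * B') := by
        rw [hN]; ring
      rw [this]
      exact le_add_of_nonneg_right (by positivity)
    have hN0 : 0 ≤ N := by positivity
    have m2 : Cφ * Cw * (A * T + B * S) ≤ 2 * (1 + Cw) * Cφ * N := by
      apply mul_le_mul _ n2 (by positivity) (by positivity)
      nlinarith
    have m3 : Cψ * Cϱ * (A' * T + B' * S) ≤ 2 * (1 + Cϱ) * Cψ * N := by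
      apply mul_le_mul _ n3 (by positivity) (by positivity)
      nlinarith
    rw [mul_assoc _ (S + A + A'), ← hN]
    linarith
  exact fin _ _ _ _ _ _ _ _ _ a5 a1 a3 a6 a2 a4 hWle hm2 hp2
end

section
/- Let 1 ≤ p, r < ∞ and 0 ≤ α, β < ∞. Define, for f ∈ L¹(𝕋) with Fourier coefficients {f_n}, the norm ‖f‖ = Σ_{k∈ℤ}|f_k| + (Σ_{k=1}^∞ |f_{−k}|^p (k+1)^{αp})^{1/p} + (Σ_{k=0}^∞ |f_k|^r (k+1)^{βr})^{1/r}. Then the set of f with ‖f‖ < ∞ is closed under pointwise multiplication, and there is a constant C (depending only on p, r, α, β) such that ‖fg‖ ≤ C·‖f‖·‖g‖ for all such f, g. -/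
open scoped ENNReal NNReal
open MeasureTheory

/-- The norm `‖f‖_W + ‖f‖_{Fℓ^{p,r}_{α,β}}`, computed from the Fourier
coefficient sequence `F` of `f`:
`Σ_{k∈ℤ}|F k| + (Σ_{k≥1} |F(-k)|^p (k+1)^{αp})^{1/p}
              + (Σ_{k≥0} |F k|^r (k+1)^{βr})^{1/r}`, valued in `[0,∞]`. -/
noncomputable def BSnorm (p r α β : ℝ) (F : ℤ → ℂ) : ℝ≥0∞ :=
  (∑' k : ℤ, (‖F k‖₊ : ℝ≥0∞)) +
  (∑' k : ℕ, (‖F (-((k : ℤ) + 1))‖₊ : ℝ≥0∞) ^ p * ((k : ℝ≥0∞) + 2) ^ (α * p)) ^ (1 / p) +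
  (∑' k : ℕ, (‖F (k : ℤ)‖₊ : ℝ≥0∞) ^ r * ((k : ℝ≥0∞) + 1) ^ (β * r)) ^ (1 / r)


lemma aux_integral_cont_eq_zero {T : ℝ} [hT : Fact (0 < T)] {h : AddCircle T → ℂ}
    (hh : Integrable h AddCircle.haarAddCircle) (h0 : ∀ n, fourierCoeff h n = 0)
    (φ : C(AddCircle T, ℂ)) : ∫ t, φ t * h t ∂AddCircle.haarAddCircle = 0 := by
  have hint : ∀ φ : C(AddCircle T, ℂ),
      Integrable (fun t => φ t * h t) AddCircle.haarAddCircle := fun φ =>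
    hh.bdd_mul (c := ‖φ‖) φ.continuous.aestronglyMeasurable
      (Filter.Eventually.of_forall fun t => φ.norm_coe_le_norm t)
  let L₀ : C(AddCircle T, ℂ) →ₗ[ℂ] ℂ :=
    { toFun := fun φ => ∫ t, φ t * h t ∂AddCircle.haarAddCircle
      map_add' := fun φ ψ => by
        rw [← integral_add (hint φ) (hint ψ)]
        simp [add_mul]
      map_smul' := fun c φ => by
        simp only [ContinuousMap.coe_smul, Pi.smul_apply, smul_eq_mul, RingHom.id_apply, mul_assoc]
        rw [integral_const_mul] }
  let L : C(AddCircle T, ℂ) →L[ℂ] ℂ := L₀.mkContinuous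
    (∫ t, ‖h t‖ ∂AddCircle.haarAddCircle) (fun φ => by
      change ‖∫ t, φ t * h t ∂AddCircle.haarAddCircle‖ ≤ _
      refine (norm_integral_le_integral_norm _).trans ?_
      rw [mul_comm, ← integral_const_mul]
      refine integral_mono (hint φ).norm (hh.norm.const_mul _) fun t => ?_
      simp only [norm_mul]
      gcongr
      exact φ.norm_coe_le_norm t)
  have hspan : (Submodule.span ℂ (Set.range (@fourier T))) ≤ L.ker := by
    rw [Submodule.span_le]
    rintro _ ⟨n, rfl⟩
    have := h0 (-n)
    simpa [fourierCoeff, L, L₀] using this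
  have := Submodule.topologicalClosure_minimal _ hspan L.isClosed_ker
  rw [span_fourier_closure_eq_top] at this
  exact this (Submodule.mem_top : φ ∈ ⊤)

lemma aux_ae_zero {T : ℝ} [hT : Fact (0 < T)] {h : AddCircle T → ℂ}
    (hh : Integrable h AddCircle.haarAddCircle) (h0 : ∀ n, fourierCoeff h n = 0) :
    h =ᵐ[AddCircle.haarAddCircle] 0 := by
  apply ae_eq_zero_of_forall_setIntegral_isClosed_eq_zero hh
  intro s hs
  have key : Filter.Tendsto
      (fun n => ∫ t, (((hs.apprSeq n t : ℝ≥0) : ℝ) : ℂ) * h t ∂AddCircle.haarAddCircle)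
      Filter.atTop (nhds (∫ t, s.indicator h t ∂AddCircle.haarAddCircle)) := by
    apply tendsto_integral_of_dominated_convergence (fun t => ‖h t‖)
    · intro n
      refine (Continuous.aestronglyMeasurable ?_).mul hh.1
      fun_prop
    · exact hh.norm
    · intro n
      refine Filter.Eventually.of_forall fun t => ?_
      rw [norm_mul]
      have := HasOuterApproxClosed.apprSeq_apply_le_one hs n t
      have h2 : ‖(((hs.apprSeq n t : ℝ≥0) : ℝ) : ℂ)‖ ≤ 1 := by
        simpa using this
      exact mul_le_of_le_one_left (norm_nonneg _) h2
    · refine Filter.Eventually.of_forall fun t => ?_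
      have h1 := tendsto_pi_nhds.1 (HasOuterApproxClosed.tendsto_apprSeq hs) t
      have h2 : Filter.Tendsto (fun n => (((hs.apprSeq n t : ℝ≥0) : ℝ) : ℂ) * h t) Filter.atTop
          (nhds ((((s.indicator (fun _ => (1 : ℝ≥0)) t : ℝ≥0) : ℝ) : ℂ) * h t)) := by
        refine Filter.Tendsto.mul_const _ ?_
        have hc : Continuous (fun x : ℝ≥0 => ((x : ℝ) : ℂ)) := by fun_prop
        exact (hc.tendsto _).comp h1
      convert h2 using 2
      by_cases ht : t ∈ s <;> simp [ht]
  rw [← integral_indicator hs.measurableSet]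
  refine tendsto_nhds_unique key ?_
  have : ∀ n, ∫ t, (((hs.apprSeq n t : ℝ≥0) : ℝ) : ℂ) * h t ∂AddCircle.haarAddCircle = 0 := by
    intro n
    exact aux_integral_cont_eq_zero hh h0
      ⟨fun t => (((hs.apprSeq n t : ℝ≥0) : ℝ) : ℂ), by fun_prop⟩
  simp [this]

lemma aux_conv {T : ℝ} [hT : Fact (0 < T)] {f : AddCircle T → ℂ}
    (hf : Integrable f AddCircle.haarAddCircle) {c : ℤ → ℂ} (hc : Summable fun k => ‖c k‖)
    (n : ℤ) :
    HasSum (fun k => c k * fourierCoeff f (n - k))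
      (fourierCoeff (fun t => f t * ∑' k, c k * fourier k t) n) := by
  have hn : ∀ (k : ℤ) (t : AddCircle T), ‖fourier k t‖ = 1 := fun k t => Circle.norm_coe _
  have hi : ∀ k : ℤ, Integrable (fun t => c k * (fourier (-(n - k)) t • f t))
      AddCircle.haarAddCircle := fun k => (hf.fourier_smul _).const_mul _
  have := hasSum_integral_of_summable_integral_norm hi (by
    simp only [norm_mul, norm_smul, hn, one_mul, integral_const_mul]
    exact hc.mul_right _)
  simp only [integral_const_mul] at this
  have e : fourierCoeff (fun t => f t * ∑' k, c k * fourier k t) n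
      = ∫ t, ∑' k, c k * (fourier (-(n - k)) t • f t) ∂AddCircle.haarAddCircle := ?_
  · rw [e]
    exact this
  refine integral_congr_ae (Filter.Eventually.of_forall fun t => ?_)
  dsimp only
  rw [smul_eq_mul, ← mul_assoc, ← tsum_mul_left]
  congr 1
  ext k
  rw [show -(n - k) = -n + k by ring, fourier_add, smul_eq_mul]
  ring

lemma aux_series {T : ℝ} [hT : Fact (0 < T)] {g : AddCircle T → ℂ}
    (hg : Integrable g AddCircle.haarAddCircle) (hc : Summable fun k => ‖fourierCoeff g k‖) :
    g =ᵐ[AddCircle.haarAddCircle] fun t => ∑' k, fourierCoeff g k * fourier k t := by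
  have hn : ∀ (k : ℤ) (t : AddCircle T), ‖fourier k t‖ = 1 := fun k t => Circle.norm_coe _
  have hcont : Continuous (fun t : AddCircle T => ∑' k, fourierCoeff g k * fourier k t) := by
    refine continuous_tsum (fun k => by fun_prop) hc fun k t => ?_
    rw [norm_mul, hn, mul_one]
  have hint : Integrable (fun t : AddCircle T => ∑' k, fourierCoeff g k * fourier k t)
      AddCircle.haarAddCircle := by
    have := BoundedContinuousFunction.integrable AddCircle.haarAddCircle
      (BoundedContinuousFunction.mkOfCompact ⟨_, hcont⟩)
    exact this
  have hcoef : ∀ n, fourierCoeff (fun t : AddCircle T => ∑' k, fourierCoeff g k * fourier k t) n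
      = fourierCoeff g n := by
    intro n
    have h1 := aux_conv (T := T) (f := fourier 0) (by
      have := BoundedContinuousFunction.integrable (AddCircle.haarAddCircle (T := T))
        (BoundedContinuousFunction.mkOfCompact (fourier 0))
      exact this) hc n
    rw [fourierCoeff_fourier] at h1
    simp only [fourier_zero, one_mul] at h1
    refine h1.unique ?_
    convert hasSum_single (f := fun k => fourierCoeff g k * Pi.single (M := fun _ => ℂ) 0 1 (n - k))
      n ?_ using 1
    · simp
    · intro k hk
      rw [Pi.single_eq_of_ne (by grind), mul_zero]
  have := aux_ae_zero (hg.sub hint) (fun n => by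
    have e := integral_sub (hg.fourier_smul (-n)) (hint.fourier_smul (-n))
    refine Eq.trans (integral_congr_ae (Filter.Eventually.of_forall fun t => ?_))
      (e.trans (sub_eq_zero.2 (hcoef n).symm))
    simp only [Pi.sub_apply, smul_sub])
  filter_upwards [this] with t ht
  simpa [sub_eq_zero] using ht

lemma aux_coeff_mul {T : ℝ} [hT : Fact (0 < T)] {f g : AddCircle T → ℂ}
    (hf : Integrable f AddCircle.haarAddCircle)
    (hg : Integrable g AddCircle.haarAddCircle) (hc : Summable fun k => ‖fourierCoeff g k‖)
    (n : ℤ) :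
    (‖fourierCoeff (f * g) n‖₊ : ℝ≥0∞) ≤
      ∑' k, (‖fourierCoeff g k‖₊ : ℝ≥0∞) * ‖fourierCoeff f (n - k)‖₊ := by
  have h1 := aux_conv hf hc n
  have h2 : fourierCoeff (f * g) n
      = fourierCoeff (fun t => f t * ∑' k, fourierCoeff g k * fourier k t) n := by
    refine congrFun (fourierCoeff_congr_ae ?_) n
    filter_upwards [aux_series hg hc] with t ht
    rw [Pi.mul_apply, ← ht]
  rw [h2, ← h1.tsum_eq]
  refine (enorm_tsum_le_tsum_enorm (f := fun k => fourierCoeff g k * fourierCoeff f (n - k))).trans ?_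
  simp [enorm_mul]
  rfl

lemma aux_jensen {r : ℝ} (hr : 1 ≤ r) (w f : ℤ → ℝ≥0∞) :
    (∑' k, w k * f k) ^ r ≤ (∑' k, w k) ^ (r - 1) * ∑' k, w k * f k ^ r := by
  have hr0 : 0 < r := by linarith
  have h1 : (∑' k, w k * f k) ≤ (∑' k, w k) ^ (1 - r⁻¹) * (∑' k, w k * f k ^ r) ^ r⁻¹ := by
    rw [ENNReal.tsum_eq_iSup_sum]
    refine iSup_le fun s => ?_
    refine (ENNReal.inner_le_weight_mul_Lp_of_nonneg s hr w f).trans ?_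
    have : 0 ≤ 1 - r⁻¹ := sub_nonneg.2 (inv_le_one_of_one_le₀ hr)
    gcongr <;> exact ENNReal.sum_le_tsum s
  refine (ENNReal.rpow_le_rpow h1 hr0.le).trans ?_
  rw [ENNReal.mul_rpow_of_nonneg _ _ hr0.le, ← ENNReal.rpow_mul, ← ENNReal.rpow_mul,
    inv_mul_cancel₀ hr0.ne', ENNReal.rpow_one, sub_mul, inv_mul_cancel₀ hr0.ne', one_mul]

lemma aux_young {r : ℝ} (hr : 1 ≤ r) (b A : ℤ → ℝ≥0∞) :
    (∑' n, (∑' k, b k * A (n - k)) ^ r) ^ (1 / r) ≤ (∑' k, b k) * (∑' n, A n ^ r) ^ (1 / r) := by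
  have hr0 : 0 < r := by linarith
  have h1 : (∑' n, (∑' k, b k * A (n - k)) ^ r) ≤ (∑' k, b k) ^ r * (∑' n, A n ^ r) := by
    calc _ ≤ ∑' n, (∑' k, b k) ^ (r - 1) * ∑' k, b k * A (n - k) ^ r :=
          ENNReal.tsum_le_tsum fun n => aux_jensen hr b _
      _ = (∑' k, b k) ^ (r - 1) * ((∑' k, b k) * ∑' n, A n ^ r) := by
          rw [ENNReal.tsum_mul_left, ENNReal.tsum_comm]
          congr 1
          rw [← ENNReal.tsum_mul_right]
          congr 1
          ext k
          rw [ENNReal.tsum_mul_left]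
          congr 1
          exact (Equiv.subRight k).tsum_eq (fun n => A n ^ r)
      _ = _ := by
          rw [← mul_assoc]
          congr 1
          nth_rw 2 [← ENNReal.rpow_one (∑' k, b k)]
          rw [← ENNReal.rpow_add_of_nonneg _ _ (by linarith) (by norm_num)]
          simp
  refine (ENNReal.rpow_le_rpow h1 (by positivity)).trans ?_
  rw [ENNReal.mul_rpow_of_nonneg _ _ (by positivity), ← ENNReal.rpow_mul,
    mul_one_div_cancel hr0.ne', ENNReal.rpow_one]

lemma aux_mink {r : ℝ} (hr : 1 ≤ r) (u v : ℤ → ℝ≥0∞) :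
    (∑' n, (u n + v n) ^ r) ^ (1 / r) ≤
      (∑' n, u n ^ r) ^ (1 / r) + (∑' n, v n ^ r) ^ (1 / r) := by
  have := ENNReal.lintegral_Lp_add_le (μ := Measure.count (α := ℤ)) (f := u) (g := v)
    (measurable_of_countable _).aemeasurable (measurable_of_countable _).aemeasurable hr
  simpa [lintegral_count] using this

lemma aux_weight {r : ℝ} (hr : 1 ≤ r) (w a b c : ℤ → ℝ≥0∞) (D : ℝ≥0∞)
    (hw : ∀ m n, w (m + n) ≤ D * (w m + w n)) (hc : ∀ n, c n ≤ ∑' k, b k * a (n - k)) :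
    (∑' n, (c n * w n) ^ r) ^ (1 / r) ≤
      D * ((∑' k, b k) * (∑' n, (a n * w n) ^ r) ^ (1 / r)
        + (∑' k, a k) * (∑' n, (b n * w n) ^ r) ^ (1 / r)) := by
  have hr0 : 0 < r := by linarith
  have h1 : ∀ n, c n * w n ≤ D * ((∑' k, b k * (fun m => a m * w m) (n - k))
      + ∑' k, a k * (fun m => b m * w m) (n - k)) := by
    intro n
    have e : ∑' k, a k * (fun m => b m * w m) (n - k) = ∑' k, (b k * w k) * a (n - k) := by
      rw [← (Equiv.subLeft n).tsum_eq]
      congr 1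
      ext k
      simp [mul_comm]
    rw [e, ← ENNReal.tsum_add, ← ENNReal.tsum_mul_left]
    refine (mul_le_mul_left (hc n) (w n)).trans ?_
    rw [← ENNReal.tsum_mul_right]
    refine ENNReal.tsum_le_tsum fun k => ?_
    have := hw (n - k) k
    rw [sub_add_cancel] at this
    calc b k * a (n - k) * w n ≤ b k * a (n - k) * (D * (w (n - k) + w k)) := by gcongr
      _ = _ := by ring
  calc _ ≤ (∑' n, (D * ((∑' k, b k * (fun m => a m * w m) (n - k))
      + ∑' k, a k * (fun m => b m * w m) (n - k))) ^ r) ^ (1 / r) := by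
        refine ENNReal.rpow_le_rpow (ENNReal.tsum_le_tsum fun n => ?_) (by positivity)
        exact ENNReal.rpow_le_rpow (h1 n) hr0.le
    _ = D * (∑' n, ((∑' k, b k * (fun m => a m * w m) (n - k))
      + ∑' k, a k * (fun m => b m * w m) (n - k)) ^ r) ^ (1 / r) := by
        simp_rw [ENNReal.mul_rpow_of_nonneg _ _ hr0.le]
        rw [ENNReal.tsum_mul_left, ENNReal.mul_rpow_of_nonneg _ _ (by positivity),
          ← ENNReal.rpow_mul, mul_one_div_cancel hr0.ne', ENNReal.rpow_one]
    _ ≤ _ := by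
        gcongr
        refine (aux_mink hr _ _).trans ?_
        gcongr
        · exact aux_young hr b (fun m => a m * w m)
        · exact aux_young hr a (fun m => b m * w m)

lemma aux_l1 (a b c : ℤ → ℝ≥0∞) (hc : ∀ n, c n ≤ ∑' k, b k * a (n - k)) :
    ∑' n, c n ≤ (∑' k, a k) * ∑' k, b k := by
  have := aux_young le_rfl b a
  simp only [ENNReal.rpow_one, div_one] at this
  rw [mul_comm]
  exact (ENNReal.tsum_le_tsum hc).trans this

noncomputable def wpos (β : ℝ) (n : ℤ) : ℝ≥0∞ :=
  if 0 ≤ n then ((n.toNat : ℝ≥0∞) + 1) ^ β else 0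

noncomputable def wneg (α : ℝ) (n : ℤ) : ℝ≥0∞ :=
  if n < 0 then (((-n).toNat : ℝ≥0∞) + 1) ^ α else 0

lemma aux_pow {β : ℝ} (hβ : 0 ≤ β) {m n : ℕ} (h : n ≤ 2 * m) :
    ((n : ℝ≥0∞) + 1) ^ β ≤ 2 ^ β * ((m : ℝ≥0∞) + 1) ^ β := by
  rw [← ENNReal.mul_rpow_of_nonneg _ _ hβ]
  gcongr
  have : n + 1 ≤ 2 * (m + 1) := by omega
  exact_mod_cast this

lemma wpos_sub {β : ℝ} (hβ : 0 ≤ β) (m n : ℤ) :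
    wpos β (m + n) ≤ 2 ^ β * (wpos β m + wpos β n) := by
  by_cases h : 0 ≤ m + n
  · rcases le_total m n with h' | h'
    · have h0 : 0 ≤ n := by omega
      calc wpos β (m + n) ≤ 2 ^ β * wpos β n := by
            simp only [wpos, if_pos h, if_pos h0]
            exact aux_pow hβ (by omega)
        _ ≤ _ := by gcongr; exact le_add_self
    · have h0 : 0 ≤ m := by omega
      calc wpos β (m + n) ≤ 2 ^ β * wpos β m := by
            simp only [wpos, if_pos h, if_pos h0]
            exact aux_pow hβ (by omega)
        _ ≤ _ := by gcongr; exact le_self_add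
  · simp [wpos, h]

lemma wneg_sub {β : ℝ} (hβ : 0 ≤ β) (m n : ℤ) :
    wneg β (m + n) ≤ 2 ^ β * (wneg β m + wneg β n) := by
  by_cases h : m + n < 0
  · rcases le_total n m with h' | h'
    · have h0 : n < 0 := by omega
      calc wneg β (m + n) ≤ 2 ^ β * wneg β n := by
            simp only [wneg, if_pos h, if_pos h0]
            exact aux_pow hβ (by omega)
        _ ≤ _ := by gcongr; exact le_add_self
    · have h0 : m < 0 := by omega
      calc wneg β (m + n) ≤ 2 ^ β * wneg β m := by
            simp only [wneg, if_pos h, if_pos h0]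
            exact aux_pow hβ (by omega)
        _ ≤ _ := by gcongr; exact le_self_add
  · simp [wneg, h]

lemma tsum_wpos {r : ℝ} (hr : 1 ≤ r) (β : ℝ) (a : ℤ → ℝ≥0∞) :
    ∑' k : ℕ, a (k : ℤ) ^ r * ((k : ℝ≥0∞) + 1) ^ (β * r) = ∑' n, (a n * wpos β n) ^ r := by
  have hr0 : 0 < r := by linarith
  rw [← Function.Injective.tsum_eq (g := fun k : ℕ => (k : ℤ)) Nat.cast_injective]
  · congr 1
    ext k
    rw [ENNReal.mul_rpow_of_nonneg _ _ hr0.le]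
    simp [wpos, ENNReal.rpow_mul]
  · intro n hn
    by_cases h : 0 ≤ n
    · exact ⟨n.toNat, by simp [h]⟩
    · simp [wpos, h, hr0] at hn

lemma tsum_wneg {r : ℝ} (hr : 1 ≤ r) (β : ℝ) (a : ℤ → ℝ≥0∞) :
    ∑' k : ℕ, a (-((k : ℤ) + 1)) ^ r * ((k : ℝ≥0∞) + 2) ^ (β * r)
      = ∑' n, (a n * wneg β n) ^ r := by
  have hr0 : 0 < r := by linarith
  rw [← Function.Injective.tsum_eq (g := fun k : ℕ => -((k : ℤ) + 1))
    (fun x y h => by simpa using h)]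
  · congr 1
    ext k
    rw [ENNReal.mul_rpow_of_nonneg _ _ hr0.le]
    have h1 : (-((k : ℤ) + 1)) < 0 := by omega
    have h2 : (- -((k : ℤ) + 1)).toNat = k + 1 := by omega
    simp only [wneg, if_pos h1, h2, ENNReal.rpow_mul]
    push_cast
    rw [add_assoc, one_add_one_eq_two]
  · intro n hn
    by_cases h : n < 0
    · exact ⟨(-n).toNat - 1, by dsimp only; omega⟩
    · simp [wneg, h, hr0] at hn

/-- Böttcher–Silbermann–Horbach theorem: for `1 ≤ p, r < ∞` and
`0 ≤ α, β < ∞`, the set `W ∩ Fℓ^{p,r}_{α,β}` is closed under pointwise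
multiplication and its norm satisfies `‖fg‖ ≤ C ‖f‖ ‖g‖` for a constant
`C` depending only on `p, r, α, β`. -/
theorem stmt_8 (p r α β : ℝ) (hp : 1 ≤ p) (hr : 1 ≤ r) (hα : 0 ≤ α) (hβ : 0 ≤ β) :
    ∃ C : ℝ≥0∞, C < ⊤ ∧
      ∀ f g : AddCircle (2 * Real.pi) → ℂ,
        Integrable f AddCircle.haarAddCircle →
        Integrable g AddCircle.haarAddCircle →
        BSnorm p r α β (fourierCoeff f) < ⊤ →
        BSnorm p r α β (fourierCoeff g) < ⊤ →
        BSnorm p r α β (fourierCoeff (f * g))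
          ≤ C * BSnorm p r α β (fourierCoeff f) * BSnorm p r α β (fourierCoeff g) := by
  refine ⟨1 + 2 ^ α * 2 + 2 ^ β * 2, by finiteness, ?_⟩
  intro f g hf hg hNf hNg
  have hs : Summable fun k => ‖fourierCoeff g k‖ := by
    have h1 : (∑' k : ℤ, (‖fourierCoeff g k‖₊ : ℝ≥0∞)) ≠ ⊤ := by
      refine ne_top_of_le_ne_top hNg.ne ?_
      unfold BSnorm
      rw [add_assoc]
      exact le_self_add
    have := ENNReal.tsum_coe_ne_top_iff_summable.1 h1
    exact NNReal.summable_coe.2 this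
  have hc := aux_coeff_mul hf hg hs
  simp only [BSnorm]
  rw [tsum_wneg hp α (fun n => (‖fourierCoeff f n‖₊ : ℝ≥0∞)),
    tsum_wneg hp α (fun n => (‖fourierCoeff g n‖₊ : ℝ≥0∞)),
    tsum_wneg hp α (fun n => (‖fourierCoeff (f * g) n‖₊ : ℝ≥0∞)),
    tsum_wpos hr β (fun n => (‖fourierCoeff f n‖₊ : ℝ≥0∞)),
    tsum_wpos hr β (fun n => (‖fourierCoeff g n‖₊ : ℝ≥0∞)),
    tsum_wpos hr β (fun n => (‖fourierCoeff (f * g) n‖₊ : ℝ≥0∞))]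
  have k1 := aux_l1 (fun n => (‖fourierCoeff f n‖₊ : ℝ≥0∞)) (fun n => (‖fourierCoeff g n‖₊ : ℝ≥0∞))
    (fun n => (‖fourierCoeff (f * g) n‖₊ : ℝ≥0∞)) hc
  have k2 := aux_weight hp _ (fun n => (‖fourierCoeff f n‖₊ : ℝ≥0∞)) (fun n => (‖fourierCoeff g n‖₊ : ℝ≥0∞))
    (fun n => (‖fourierCoeff (f * g) n‖₊ : ℝ≥0∞)) _ (wneg_sub hα) hc
  have k3 := aux_weight hr _ (fun n => (‖fourierCoeff f n‖₊ : ℝ≥0∞)) (fun n => (‖fourierCoeff g n‖₊ : ℝ≥0∞))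
    (fun n => (‖fourierCoeff (f * g) n‖₊ : ℝ≥0∞)) _ (wpos_sub hβ) hc
  refine (add_le_add (add_le_add k1 k2) k3).trans ?_
  generalize (∑' k : ℤ, (‖fourierCoeff f k‖₊ : ℝ≥0∞)) = a1
  generalize (∑' k : ℤ, (‖fourierCoeff g k‖₊ : ℝ≥0∞)) = b1
  generalize (∑' n, ((‖fourierCoeff f n‖₊ : ℝ≥0∞) * wneg α n) ^ p) ^ (1 / p) = a2
  generalize (∑' n, ((‖fourierCoeff g n‖₊ : ℝ≥0∞) * wneg α n) ^ p) ^ (1 / p) = b2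
  generalize (∑' n, ((‖fourierCoeff f n‖₊ : ℝ≥0∞) * wpos β n) ^ r) ^ (1 / r) = a3
  generalize (∑' n, ((‖fourierCoeff g n‖₊ : ℝ≥0∞) * wpos β n) ^ r) ^ (1 / r) = b3
  have a1le : a1 ≤ a1 + a2 + a3 := by rw [add_assoc]; exact le_self_add
  have b1le : b1 ≤ b1 + b2 + b3 := by rw [add_assoc]; exact le_self_add
  have a2le : a2 ≤ a1 + a2 + a3 := le_add_self.trans le_self_add
  have b2le : b2 ≤ b1 + b2 + b3 := le_add_self.trans le_self_add
  have a3le : a3 ≤ a1 + a2 + a3 := le_add_self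
  have b3le : b3 ≤ b1 + b2 + b3 := le_add_self
  generalize a1 + a2 + a3 = X at *
  generalize b1 + b2 + b3 = Y at *
  calc a1 * b1 + 2 ^ α * (b1 * a2 + a1 * b2) + 2 ^ β * (b1 * a3 + a1 * b3)
      ≤ X * Y + 2 ^ α * (Y * X + X * Y) + 2 ^ β * (Y * X + X * Y) := by gcongr
    _ = _ := by ring
end
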